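/- Fix β > 0, d ≥ 1, s ≥ 0 and u ≥ ℓ ≥ 0, and suppose f ∈ A(s, ℓ, u). Then for all R > 0 and all p ≥ p_C(s, ℓ) there exists a constant L_C = L_C(p, R) > 0 such that for all probability measures μ, ν ∈ P_{p,R}(ℝ^d), ‖C_β(μ) − C_β(ν)‖_F ≤ L_C · W_p(μ, ν). -/

import Mathlib

open MeasureTheory ENNReal
open scoped NNReal

noncomputable section

/-- Euclidean space `ℝ^d`. -/
abbrev Rd (d : ℕ) := EuclideanSpace ℝ (Fin d)

/-- The weight function `x ↦ exp (-β f x)`. -/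
def wFn (β : ℝ) {d : ℕ} (f : Rd d → ℝ) (x : Rd d) : ℝ := Real.exp (-β * f x)

/-- The weighted mean `M_β(μ) = (∫ x e^{-β f x} dμ) / (∫ e^{-β f x} dμ)`. -/
def wMean (β : ℝ) {d : ℕ} (f : Rd d → ℝ) (μ : Measure (Rd d)) : Rd d :=
  (∫ x, wFn β f x ∂μ)⁻¹ • ∫ x, wFn β f x • x ∂μ

/-- The weighted covariance `C_β(μ)`, a `d × d` matrix. -/
def wCov (β : ℝ) {d : ℕ} (f : Rd d → ℝ) (μ : Measure (Rd d)) :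
    Matrix (Fin d) (Fin d) ℝ := fun i j =>
  (∫ x, wFn β f x ∂μ)⁻¹ *
    ∫ x, wFn β f x * ((x i - wMean β f μ i) * (x j - wMean β f μ j)) ∂μ

/-- Frobenius norm of a matrix. -/
def frobNorm {m n : ℕ} (A : Matrix (Fin m) (Fin n) ℝ) : ℝ :=
  Real.sqrt (∑ i, ∑ j, (A i j) ^ 2)

/-- `S` is the (unique) positive semidefinite square root of `A`. -/
def IsPSDSqrt {d : ℕ} (S A : Matrix (Fin d) (Fin d) ℝ) : Prop :=
  S.PosSemidef ∧ S * S = A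

/-- `μ ∈ P_{p,R}`: the `p`-th moment of `μ` is bounded, `(∫ |x|^p dμ)^{1/p} ≤ R`. -/
def MomLE (p R : ℝ) {d : ℕ} (μ : Measure (Rd d)) : Prop :=
  ∫⁻ x, (‖x‖₊ : ℝ≥0∞) ^ p ∂μ ≤ ENNReal.ofReal (R ^ p)

/-- `μ ∈ P_p`: the `p`-th moment of `μ` is finite. -/
def MomFin (p : ℝ) {d : ℕ} (μ : Measure (Rd d)) : Prop :=
  ∫⁻ x, (‖x‖₊ : ℝ≥0∞) ^ p ∂μ < ⊤

/-- The Wasserstein-`p` distance between two probability measures on `ℝ^d`: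
the infimum over couplings `π` of `μ` and `ν` of `(∬ |x - y|^p dπ)^{1/p}`. -/
def Wp (p : ℝ) {d : ℕ} (μ ν : Measure (Rd d)) : ℝ :=
  (sInf {c : ℝ≥0∞ | ∃ π : Measure (Rd d × Rd d),
      π.map Prod.fst = μ ∧ π.map Prod.snd = ν ∧
      c = (∫⁻ z, (‖z.1 - z.2‖₊ : ℝ≥0∞) ^ p ∂π) ^ (1 / p)}).toReal

/-- `f_* = inf f`. -/
def fStar {d : ℕ} (f : Rd d → ℝ) : ℝ := sInf (Set.range f)

/-- The class `A(s, ℓ, u)` of objective functions: `f` is bounded from below,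
locally Lipschitz with growth exponent `s`, and `f - inf f` grows at least like
`|x|^ℓ` and at most like `|x|^u`. -/
structure ClassA {d : ℕ} (s ℓ u : ℝ) (f : Rd d → ℝ) : Prop where
  bddBelow : BddBelow (Set.range f)
  lip : ∃ Lf > 0, ∀ x y : Rd d, |f x - f y| ≤ Lf * (1 + ‖x‖ + ‖y‖) ^ s * ‖x - y‖
  growth_lower : ∃ cl > 0, ∃ Cl > 0, ∀ x : Rd d, cl * ‖x‖ ^ ℓ - Cl ≤ f x - fStar f
  growth_upper : ∃ cu > 0, ∃ Cu > 0, ∀ x : Rd d, f x - fStar f ≤ cu * ‖x‖ ^ u + Cu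

/-- `p_M(s, ℓ) = s + 2` if `ℓ = 0`, and `1` if `ℓ > 0`. -/
def pM (s ℓ : ℝ) : ℝ := if ℓ = 0 then s + 2 else 1

/-- `p_C(s, ℓ) = s + 3` if `ℓ = 0`, and `1` if `ℓ > 0`. -/
def pC (s ℓ : ℝ) : ℝ := if ℓ = 0 then s + 3 else 1

/-- Exponential decay beats polynomial growth. -/
lemma aux_decay (a ℓ m : ℝ) (ha : 0 < a) (hℓ : 0 < ℓ) (hm : 0 ≤ m) :
    ∃ B > 0, ∀ r : ℝ, 0 ≤ r → Real.exp (-(a * r ^ ℓ)) * (1 + r) ^ m ≤ B := by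
  obtain ⟨k, hk⟩ := exists_nat_ge (m / ℓ)
  refine ⟨2 ^ m + 2 ^ m * (k.factorial / a ^ k), by positivity, fun r hr => ?_⟩
  have h2 : (0 : ℝ) < 2 ^ m := by positivity
  have hfa : (0 : ℝ) ≤ k.factorial / a ^ k := by positivity
  rcases le_total r 1 with h1 | h1
  · have e1 : Real.exp (-(a * r ^ ℓ)) ≤ 1 := by
      rw [Real.exp_le_one_iff]
      have : 0 ≤ a * r ^ ℓ := by positivity
      linarith
    have e2 : (1 + r) ^ m ≤ 2 ^ m := Real.rpow_le_rpow (by linarith) (by linarith) hm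
    have e3 : Real.exp (-(a * r ^ ℓ)) * (1 + r) ^ m ≤ 1 * 2 ^ m := by gcongr
    nlinarith [mul_nonneg h2.le hfa]
  · have e2 : (1 + r) ^ m ≤ (2 * r) ^ m := Real.rpow_le_rpow (by linarith) (by linarith) hm
    rw [Real.mul_rpow (by norm_num) hr] at e2
    have ht : 1 ≤ r ^ ℓ := Real.one_le_rpow h1 hℓ.le
    have e3 : r ^ m ≤ (r ^ ℓ) ^ k := by
      rw [← Real.rpow_natCast, ← Real.rpow_mul hr]
      apply Real.rpow_le_rpow_of_exponent_le h1
      rw [div_le_iff₀ hℓ] at hk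
      linarith
    have e4 := Real.pow_div_factorial_le_exp (a * r ^ ℓ) (by positivity) k
    have hkf : (0 : ℝ) < k.factorial := by positivity
    rw [div_le_iff₀ hkf, mul_pow] at e4
    have e5 : (r ^ ℓ) ^ k ≤ Real.exp (a * r ^ ℓ) * (k.factorial / a ^ k) := by
      rw [← mul_div_assoc, le_div_iff₀ (by positivity)]
      linarith
    calc Real.exp (-(a * r ^ ℓ)) * (1 + r) ^ m
        ≤ Real.exp (-(a * r ^ ℓ)) * (2 ^ m * (Real.exp (a * r ^ ℓ) * (k.factorial / a ^ k))) := by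
          gcongr
          exact e2.trans (by gcongr; exact e3.trans e5)
      _ = (Real.exp (-(a * r ^ ℓ)) * Real.exp (a * r ^ ℓ)) * (2 ^ m * (k.factorial / a ^ k)) := by
          ring
      _ = 2 ^ m * (k.factorial / a ^ k) := by
          rw [← Real.exp_add]; simp
      _ ≤ _ := by linarith

lemma aux_exp (a b : ℝ) : |Real.exp a - Real.exp b| ≤ |a - b| * (Real.exp a + Real.exp b) := by
  wlog h : b ≤ a generalizing a b
  · have := this b a (le_of_not_ge h)
    rw [abs_sub_comm, abs_sub_comm a b, add_comm]; exact this
  have h1 : Real.exp b ≤ Real.exp a := Real.exp_le_exp.2 h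
  rw [abs_of_nonneg (by linarith), abs_of_nonneg (by linarith)]
  have h2 := Real.add_one_le_exp (b - a)
  have h3 : Real.exp b = Real.exp a * Real.exp (b - a) := by
    rw [← Real.exp_add]; ring_nf
  have := Real.exp_pos a
  have := Real.exp_pos b
  nlinarith

/-- Admissible polynomial test functions. -/
structure Adm {d : ℕ} (g : Rd d → ℝ) : Prop where
  cont : Continuous g
  bd : ∀ x, |g x| ≤ (1 + ‖x‖) ^ (2 : ℝ)
  lip : ∀ x y, |g x - g y| ≤ (1 + ‖x‖ + ‖y‖) ^ (2 : ℝ) * ‖x - y‖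

lemma coord_le {d : ℕ} (x : Rd d) (i : Fin d) : |x i| ≤ ‖x‖ := by
  simpa using PiLp.norm_apply_le x i

lemma adm_one {d : ℕ} : Adm (fun _ : Rd d => (1 : ℝ)) where
  cont := continuous_const
  bd x := by
    have := norm_nonneg x
    rw [Real.rpow_two, abs_one]; nlinarith
  lip x y := by simp; positivity

lemma adm_coord {d : ℕ} (i : Fin d) : Adm (fun x : Rd d => x i) where
  cont := by fun_prop
  bd x := by
    have := norm_nonneg x
    have := coord_le x i
    rw [Real.rpow_two]; nlinarith
  lip x y := by
    have h := coord_le (x - y) i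
    have hx := norm_nonneg x
    have hy := norm_nonneg y
    have hxy := norm_nonneg (x - y)
    rw [Real.rpow_two]
    have h1 : 1 ≤ (1 + ‖x‖ + ‖y‖) ^ 2 := by nlinarith
    have : |x i - y i| ≤ ‖x - y‖ := by simpa using h
    nlinarith

lemma adm_coord2 {d : ℕ} (i j : Fin d) : Adm (fun x : Rd d => x i * x j) where
  cont := by fun_prop
  bd x := by
    have := norm_nonneg x
    have h1 := coord_le x i
    have h2 := coord_le x j
    rw [Real.rpow_two, abs_mul]
    have := mul_le_mul h1 h2 (abs_nonneg _) (norm_nonneg x)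
    nlinarith
  lip x y := by
    have hx := norm_nonneg x
    have hy := norm_nonneg y
    have hxy := norm_nonneg (x - y)
    rw [Real.rpow_two]
    have h1 : |x i - y i| ≤ ‖x - y‖ := by simpa using coord_le (x - y) i
    have h2 : |x j - y j| ≤ ‖x - y‖ := by simpa using coord_le (x - y) j
    have e : x i * x j - y i * y j = x i * (x j - y j) + (x i - y i) * y j := by ring
    calc |x i * x j - y i * y j| ≤ |x i| * |x j - y j| + |x i - y i| * |y j| := by
          rw [e, ← abs_mul, ← abs_mul]; exact abs_add_le _ _
      _ ≤ ‖x‖ * ‖x - y‖ + ‖x - y‖ * ‖y‖ := by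
          gcongr
          · exact coord_le x i
          · exact coord_le y j
      _ = (‖x‖ + ‖y‖) * ‖x - y‖ := by ring
      _ ≤ _ := by
          gcongr
          nlinarith

lemma classA_continuous {d : ℕ} {s ℓ u : ℝ} {f : Rd d → ℝ} (hs : 0 ≤ s) (hf : ClassA s ℓ u f) :
    Continuous f := by
  obtain ⟨L, hL, h⟩ := hf.lip
  rw [continuous_iff_continuousAt]
  intro x
  rw [ContinuousAt, tendsto_iff_norm_sub_tendsto_zero]
  have hc : Continuous (fun y : Rd d => L * (1 + ‖y‖ + ‖x‖) ^ s * ‖y - x‖) := by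
    have : Continuous (fun y : Rd d => (1 + ‖y‖ + ‖x‖) ^ s) :=
      Continuous.rpow_const (by fun_prop) (fun y => Or.inr hs)
    fun_prop
  have h0 := hc.tendsto x
  simp only [sub_self, norm_zero, mul_zero] at h0
  exact squeeze_zero (fun _ => norm_nonneg _) (fun y => h y x) h0

/-- Key pointwise estimate. -/
lemma key_lip (β : ℝ) (hβ : 0 < β) (d : ℕ)
    (s ℓ u : ℝ) (hs : 0 ≤ s) (hℓ : 0 ≤ ℓ)
    (f : Rd d → ℝ) (hf : ClassA s ℓ u f) (p : ℝ) (hp : pC s ℓ ≤ p) :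
    ∃ K > 0, ∀ g : Rd d → ℝ, Adm g → |wFn β f 0 * g 0| ≤ K ∧
      ∀ x y, |wFn β f x * g x - wFn β f y * g y| ≤
        K * ((1 + ‖x‖ + ‖y‖) ^ (p - 1) * ‖x - y‖) := by
  obtain ⟨L, hL, hlip⟩ := hf.lip
  have hwpos : ∀ x, 0 < wFn β f x := fun x => Real.exp_pos _
  have base : ∀ g : Rd d → ℝ, Adm g → ∀ x y, |wFn β f x * g x - wFn β f y * g y| ≤
      (β * L + 1) * ‖x - y‖ * ((wFn β f x + wFn β f y) * (1 + ‖x‖ + ‖y‖) ^ (s + 2)) := by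
    intro g hg x y
    have hx := norm_nonneg x
    have hy := norm_nonneg y
    have hxy := norm_nonneg (x - y)
    have hT : 1 ≤ 1 + ‖x‖ + ‖y‖ := by linarith
    have hw : |wFn β f x - wFn β f y| ≤
        (β * (L * (1 + ‖x‖ + ‖y‖) ^ s * ‖x - y‖)) * (wFn β f x + wFn β f y) := by
      refine (aux_exp _ _).trans ?_
      have : |-β * f x - -β * f y| = β * |f x - f y| := by
        rw [← mul_sub, abs_mul, abs_neg, abs_of_pos hβ]
      rw [this]
      have := hwpos x
      have := hwpos y
      unfold wFn at *
      gcongr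
      exact hlip x y
    have hgx : |g x| ≤ (1 + ‖x‖ + ‖y‖) ^ (2 : ℝ) :=
      (hg.bd x).trans (Real.rpow_le_rpow (by linarith) (by linarith) (by norm_num))
    have hadd : (1 + ‖x‖ + ‖y‖) ^ (s + 2) = (1 + ‖x‖ + ‖y‖) ^ s * (1 + ‖x‖ + ‖y‖) ^ (2 : ℝ) :=
      Real.rpow_add (by linarith) _ _
    have hTs : 1 ≤ (1 + ‖x‖ + ‖y‖) ^ s := Real.one_le_rpow hT hs
    have hT2 : 0 ≤ (1 + ‖x‖ + ‖y‖) ^ (2 : ℝ) := by positivity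
    have e : wFn β f x * g x - wFn β f y * g y =
      (wFn β f x - wFn β f y) * g x + wFn β f y * (g x - g y) := by ring
    have hwx := hwpos x
    have hwy := hwpos y
    have hgl := hg.lip x y
    rw [hadd]
    generalize (1 + ‖x‖ + ‖y‖) ^ s = Ts at *
    generalize (1 + ‖x‖ + ‖y‖) ^ (2 : ℝ) = T2 at *
    generalize wFn β f x = a at *
    generalize wFn β f y = b at *
    calc |a * g x - b * g y| ≤ |a - b| * |g x| + b * |g x - g y| := by
          rw [e]
          refine (abs_add_le _ _).trans ?_
          rw [abs_mul, abs_mul, abs_of_pos hwy]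
      _ ≤ (β * (L * Ts * ‖x - y‖)) * (a + b) * T2 + (a + b) * (Ts * T2 * ‖x - y‖) := by
          gcongr
          · linarith
          · refine hgl.trans ?_
            gcongr
            nlinarith
      _ = _ := by ring
  unfold pC at hp
  split_ifs at hp with h0
  · -- the case ℓ = 0
    set W0 := Real.exp (-β * fStar f) with hW0
    have hW0p : 0 < W0 := Real.exp_pos _
    have hw : ∀ x, wFn β f x ≤ W0 := by
      intro x
      apply Real.exp_le_exp.2
      have : fStar f ≤ f x := csInf_le hf.bddBelow ⟨x, rfl⟩
      nlinarith
    refine ⟨(β * L + 1) * (2 * W0) + W0, by positivity, fun g hg => ⟨?_, fun x y => ?_⟩⟩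
    · have := hg.bd 0
      simp only [norm_zero, add_zero, Real.one_rpow] at this
      rw [abs_mul, abs_of_pos (hwpos 0)]
      have h1 : wFn β f 0 * |g 0| ≤ W0 * 1 := by
        gcongr
        exact hw 0
      have : 0 < (β * L + 1) * (2 * W0) := by positivity
      linarith
    · refine (base g hg x y).trans ?_
      have hx := norm_nonneg x
      have hy := norm_nonneg y
      have h1 : (1 + ‖x‖ + ‖y‖) ^ (s + 2) ≤ (1 + ‖x‖ + ‖y‖) ^ (p - 1) :=
        Real.rpow_le_rpow_of_exponent_le (by linarith) (by linarith)
      have h2 : wFn β f x + wFn β f y ≤ 2 * W0 := by linarith [hw x, hw y]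
      calc _ ≤ (β * L + 1) * ‖x - y‖ * ((2 * W0) * (1 + ‖x‖ + ‖y‖) ^ (p - 1)) := by gcongr
        _ = ((β * L + 1) * (2 * W0)) * ((1 + ‖x‖ + ‖y‖) ^ (p - 1) * ‖x - y‖) := by ring
        _ ≤ _ := by
          gcongr
          linarith
  · -- the case ℓ > 0
    have hℓ' : 0 < ℓ := lt_of_le_of_ne hℓ (Ne.symm h0)
    obtain ⟨cl, hcl, Cl, hCl, hgl⟩ := hf.growth_lower
    obtain ⟨B0, hB0, hB0'⟩ := aux_decay (β * cl) ℓ (s + 2) (by positivity) hℓ' (by linarith)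
    obtain ⟨B, hB, hwB⟩ : ∃ B > 0, ∀ x, wFn β f x * (1 + ‖x‖) ^ (s + 2) ≤ B := by
      refine ⟨Real.exp (β * (Cl - fStar f)) * B0, by positivity, fun x => ?_⟩
      have h1 : wFn β f x ≤ Real.exp (β * (Cl - fStar f)) * Real.exp (-(β * cl * ‖x‖ ^ ℓ)) := by
        rw [← Real.exp_add]
        apply Real.exp_le_exp.2
        nlinarith [hgl x]
      calc _ ≤ Real.exp (β * (Cl - fStar f)) * Real.exp (-(β * cl * ‖x‖ ^ ℓ)) *
            (1 + ‖x‖) ^ (s + 2) := by gcongr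
        _ = Real.exp (β * (Cl - fStar f)) * (Real.exp (-(β * cl * ‖x‖ ^ ℓ)) *
            (1 + ‖x‖) ^ (s + 2)) := by ring
        _ ≤ _ := by
          gcongr
          exact hB0' _ (norm_nonneg x)
    have hbd : ∀ g : Rd d → ℝ, Adm g → ∀ x, |wFn β f x * g x| ≤ B := by
      intro g hg x
      rw [abs_mul, abs_of_pos (hwpos x)]
      refine le_trans ?_ (hwB x)
      have := hwpos x
      gcongr
      refine (hg.bd x).trans ?_
      exact Real.rpow_le_rpow_of_exponent_le (by linarith [norm_nonneg x]) (by linarith)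
    set K := (β * L + 1) * (2 ^ (s + 2) * (2 * B)) + 2 * B with hK
    have hKp : 0 < (β * L + 1) * (2 ^ (s + 2) * (2 * B)) := by positivity
    have hmain : ∀ g : Rd d → ℝ, Adm g → ∀ x y, |wFn β f x * g x - wFn β f y * g y| ≤
        K * ‖x - y‖ := by
      intro g hg x y
      have hx := norm_nonneg x
      have hy := norm_nonneg y
      have hxy := norm_nonneg (x - y)
      rcases le_total ‖x - y‖ 1 with h1 | h1
      · refine (base g hg x y).trans ?_
        have t1 : ‖x‖ ≤ ‖y‖ + ‖x - y‖ := by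
          have := norm_add_le y (x - y)
          simpa using this
        have t2 : ‖y‖ ≤ ‖x‖ + ‖x - y‖ := by
          have := norm_sub_le x (x - y)
          simpa using this
        have a1 : (1 + ‖x‖ + ‖y‖) ^ (s + 2) ≤ 2 ^ (s + 2) * (1 + ‖x‖) ^ (s + 2) := by
          rw [← Real.mul_rpow (by norm_num) (by linarith)]
          exact Real.rpow_le_rpow (by linarith) (by linarith) (by linarith)
        have a2 : (1 + ‖x‖ + ‖y‖) ^ (s + 2) ≤ 2 ^ (s + 2) * (1 + ‖y‖) ^ (s + 2) := by
          rw [← Real.mul_rpow (by norm_num) (by linarith)]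
          exact Real.rpow_le_rpow (by linarith) (by linarith) (by linarith)
        have b1 := mul_le_mul_of_nonneg_left a1 (hwpos x).le
        have b2 := mul_le_mul_of_nonneg_left a2 (hwpos y).le
        have h2 : (0 : ℝ) < 2 ^ (s + 2) := by positivity
        have c1 := mul_le_mul_of_nonneg_left (hwB x) h2.le
        have c2 := mul_le_mul_of_nonneg_left (hwB y) h2.le
        have : (wFn β f x + wFn β f y) * (1 + ‖x‖ + ‖y‖) ^ (s + 2) ≤ 2 ^ (s + 2) * (2 * B) := by
          nlinarith
        calc _ ≤ (β * L + 1) * ‖x - y‖ * (2 ^ (s + 2) * (2 * B)) := by gcongr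
          _ = (β * L + 1) * (2 ^ (s + 2) * (2 * B)) * ‖x - y‖ := by ring
          _ ≤ _ := by
            gcongr
            linarith
      · have e1 := hbd g hg x
        have e2 := hbd g hg y
        have := abs_sub (wFn β f x * g x) (wFn β f y * g y)
        nlinarith
    refine ⟨K, by positivity, fun g hg => ⟨(hbd g hg 0).trans (by linarith), fun x y => ?_⟩⟩
    refine (hmain g hg x y).trans ?_
    have : 1 ≤ (1 + ‖x‖ + ‖y‖) ^ (p - 1) :=
      Real.one_le_rpow (by linarith [norm_nonneg x, norm_nonneg y]) (by linarith)
    have hKp' : 0 < K := by positivity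
    gcongr
    nlinarith [norm_nonneg (x - y)]

lemma rpow3 (p a b : ℝ) (hp : 1 ≤ p) (ha : 0 ≤ a) (hb : 0 ≤ b) :
    (1 + a + b) ^ p ≤ 3 ^ p * (1 + a ^ p + b ^ p) := by
  have key : ∀ m : ℝ, 0 ≤ m → 1 + a + b ≤ 3 * m → m ^ p ≤ 1 + a ^ p + b ^ p →
      (1 + a + b) ^ p ≤ 3 ^ p * (1 + a ^ p + b ^ p) := by
    intro m hm h1 h2
    calc (1 + a + b) ^ p ≤ (3 * m) ^ p := Real.rpow_le_rpow (by positivity) h1 (by linarith)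
      _ = 3 ^ p * m ^ p := Real.mul_rpow (by norm_num) hm
      _ ≤ _ := by gcongr
  have hap : 0 ≤ a ^ p := by positivity
  have hbp : 0 ≤ b ^ p := by positivity
  rcases le_total a b with hab | hab
  · rcases le_total b 1 with h | h
    · exact key 1 (by norm_num) (by linarith) (by simp; linarith)
    · exact key b hb (by linarith) (by linarith)
  · rcases le_total a 1 with h | h
    · exact key 1 (by norm_num) (by linarith) (by simp; linarith)
    · exact key a ha (by linarith) (by linarith)

lemma nnnorm_rpow {d : ℕ} (x : Rd d) (p : ℝ) (hp : 0 ≤ p) :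
    (‖x‖₊ : ℝ≥0∞) ^ p = ENNReal.ofReal (‖x‖ ^ p) := by
  rw [← ENNReal.ofReal_rpow_of_nonneg (norm_nonneg x) hp, ofReal_norm]
  rfl

/-- Moment bound for couplings. -/
lemma coupling_mom {d : ℕ} (p R : ℝ) (hp : 1 ≤ p) (hR : 0 < R) (μ ν : Measure (Rd d))
    [IsProbabilityMeasure μ] (hμ : MomLE p R μ) (hν : MomLE p R ν)
    (π : Measure (Rd d × Rd d)) (h1 : π.map Prod.fst = μ) (h2 : π.map Prod.snd = ν) :
    ∫⁻ z, ENNReal.ofReal ((1 + ‖z.1‖ + ‖z.2‖) ^ p) ∂π ≤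
      ENNReal.ofReal (3 ^ p * (1 + R ^ p + R ^ p)) := by
  have hpi : π Set.univ = 1 := by
    have : (π.map Prod.fst) Set.univ = 1 := by rw [h1]; simp
    rwa [Measure.map_apply measurable_fst MeasurableSet.univ, Set.preimage_univ] at this
  have m1 : ∫⁻ z, ENNReal.ofReal (‖z.1‖ ^ p) ∂π ≤ ENNReal.ofReal (R ^ p) := by
    have := hμ
    unfold MomLE at this
    rw [← h1, lintegral_map (by fun_prop) measurable_fst] at this
    simpa only [nnnorm_rpow _ p (by linarith)] using this
  have m2 : ∫⁻ z, ENNReal.ofReal (‖z.2‖ ^ p) ∂π ≤ ENNReal.ofReal (R ^ p) := by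
    have := hν
    unfold MomLE at this
    rw [← h2, lintegral_map (by fun_prop) measurable_snd] at this
    simpa only [nnnorm_rpow _ p (by linarith)] using this
  calc _ ≤ ∫⁻ z, ENNReal.ofReal (3 ^ p) *
        (1 + ENNReal.ofReal (‖z.1‖ ^ p) + ENNReal.ofReal (‖z.2‖ ^ p)) ∂π := by
        apply lintegral_mono
        intro z
        dsimp only
        rw [← ENNReal.ofReal_one, ← ENNReal.ofReal_add (by norm_num) (by positivity),
          ← ENNReal.ofReal_add (by positivity) (by positivity),
          ← ENNReal.ofReal_mul (by positivity)]
        exact ENNReal.ofReal_le_ofReal (rpow3 p _ _ hp (norm_nonneg _) (norm_nonneg _))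
    _ = ENNReal.ofReal (3 ^ p) * (1 + ∫⁻ z, ENNReal.ofReal (‖z.1‖ ^ p) ∂π +
          ∫⁻ z, ENNReal.ofReal (‖z.2‖ ^ p) ∂π) := by
        rw [lintegral_const_mul _ (by fun_prop), lintegral_add_left (by fun_prop),
          lintegral_add_left (by fun_prop)]
        simp [hpi]
    _ ≤ ENNReal.ofReal (3 ^ p) * (1 + ENNReal.ofReal (R ^ p) + ENNReal.ofReal (R ^ p)) := by
        gcongr
    _ = _ := by
        have : 0 ≤ R ^ p := by positivity
        rw [← ENNReal.ofReal_one, ← ENNReal.ofReal_add (by norm_num) (by positivity),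
          ← ENNReal.ofReal_add (by positivity) (by positivity),
          ← ENNReal.ofReal_mul (by positivity)]

/-- Cost of a coupling is finite. -/
lemma coupling_cost {d : ℕ} (p R : ℝ) (hp : 1 ≤ p) (hR : 0 < R) (μ ν : Measure (Rd d))
    [IsProbabilityMeasure μ] (hμ : MomLE p R μ) (hν : MomLE p R ν)
    (π : Measure (Rd d × Rd d)) (h1 : π.map Prod.fst = μ) (h2 : π.map Prod.snd = ν) :
    (∫⁻ z, (‖z.1 - z.2‖₊ : ℝ≥0∞) ^ p ∂π) ^ (1 / p) ≠ ⊤ := by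
  apply ENNReal.rpow_ne_top_of_nonneg (by positivity)
  refine ne_top_of_le_ne_top ENNReal.ofReal_ne_top
    (le_trans ?_ (coupling_mom p R hp hR μ ν hμ hν π h1 h2))
  apply lintegral_mono
  intro z
  dsimp only
  rw [nnnorm_rpow _ p (by linarith)]
  apply ENNReal.ofReal_le_ofReal
  apply Real.rpow_le_rpow (norm_nonneg _) _ (by linarith)
  linarith [norm_sub_le z.1 z.2]

/-- Integrability and bound. -/
lemma int_bound {d : ℕ} (p R : ℝ) (hp : 1 ≤ p) (hR : 0 < R) (μ : Measure (Rd d))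
    [IsProbabilityMeasure μ] (hμ : MomLE p R μ) (h : Rd d → ℝ) (hc : Continuous h) (K : ℝ)
    (hK : 0 < K) (h0 : |h 0| ≤ K)
    (hl : ∀ x y, |h x - h y| ≤ K * ((1 + ‖x‖ + ‖y‖) ^ (p - 1) * ‖x - y‖)) :
    Integrable h μ ∧ |∫ x, h x ∂μ| ≤ 2 * K * (3 ^ p * (1 + R ^ p + R ^ p)) := by
  have hb : ∀ x, |h x| ≤ 2 * K * (1 + ‖x‖) ^ p := by
    intro x
    have e := hl x 0
    simp only [norm_zero, add_zero, sub_zero] at e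
    have hx := norm_nonneg x
    have e1 : (1 + ‖x‖) ^ p = (1 + ‖x‖) ^ (p - 1) * (1 + ‖x‖) := by
      rw [← Real.rpow_add_one (by positivity)]; ring_nf
    have e2 : 1 ≤ (1 + ‖x‖) ^ p := Real.one_le_rpow (by linarith) (by linarith)
    have e3 : (1 + ‖x‖) ^ (p - 1) * ‖x‖ ≤ (1 + ‖x‖) ^ p := by
      rw [e1]; gcongr; linarith
    have e4 : |h x| ≤ |h x - h 0| + |h 0| := by
      have := abs_add_le (h x - h 0) (h 0)
      simpa using this
    nlinarith
  have hQ : ∫⁻ x, ‖h x‖ₑ ∂μ ≤ ENNReal.ofReal (2 * K * (3 ^ p * (1 + R ^ p + R ^ p))) := by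
    have hm := coupling_mom p R hp hR μ μ hμ hμ (μ.map (fun x => (x, x)))
      (by rw [Measure.map_map measurable_fst (by fun_prop)]; exact Measure.map_id)
      (by rw [Measure.map_map measurable_snd (by fun_prop)]; exact Measure.map_id)
    rw [lintegral_map (by fun_prop) (by fun_prop)] at hm
    rw [ENNReal.ofReal_mul (by positivity)]
    refine le_trans ?_ (mul_le_mul_right hm _)
    rw [← lintegral_const_mul _ (by fun_prop)]
    apply lintegral_mono
    intro x
    dsimp only
    rw [← ENNReal.ofReal_mul (by positivity), ← ofReal_norm]
    apply ENNReal.ofReal_le_ofReal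
    refine (hb x).trans ?_
    gcongr
    linarith [norm_nonneg x]
  have hi : Integrable h μ :=
    ⟨hc.aestronglyMeasurable, lt_of_le_of_lt hQ ENNReal.ofReal_lt_top⟩
  refine ⟨hi, ?_⟩
  have hR' : 0 ≤ R ^ p := by positivity
  have := (enorm_integral_le_lintegral_enorm h).trans hQ
  rw [← ofReal_norm, ENNReal.ofReal_le_ofReal_iff (by positivity)] at this
  exact this

/-- Difference of integrals against a coupling. -/
lemma int_diff {d : ℕ} (p R : ℝ) (hp : 1 ≤ p) (hR : 0 < R) (μ ν : Measure (Rd d))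
    [IsProbabilityMeasure μ] [IsProbabilityMeasure ν] (hμ : MomLE p R μ) (hν : MomLE p R ν)
    (π : Measure (Rd d × Rd d)) (h1 : π.map Prod.fst = μ) (h2 : π.map Prod.snd = ν)
    (h : Rd d → ℝ) (hc : Continuous h) (K : ℝ) (hK : 0 < K) (h0 : |h 0| ≤ K)
    (hl : ∀ x y, |h x - h y| ≤ K * ((1 + ‖x‖ + ‖y‖) ^ (p - 1) * ‖x - y‖)) :
    |∫ x, h x ∂μ - ∫ x, h x ∂ν| ≤ K * (3 ^ p * (1 + R ^ p + R ^ p)) ^ ((p - 1) / p) *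
      ((∫⁻ z, (‖z.1 - z.2‖₊ : ℝ≥0∞) ^ p ∂π) ^ (1 / p)).toReal := by
  have hfin := coupling_cost p R hp hR μ ν hμ hν π h1 h2
  have hmom := coupling_mom p R hp hR μ ν hμ hν π h1 h2
  set Q := 3 ^ p * (1 + R ^ p + R ^ p) with hQ
  set c := (∫⁻ z, (‖z.1 - z.2‖₊ : ℝ≥0∞) ^ p ∂π) ^ (1 / p) with hcdef
  have hQ0 : 0 < Q := by positivity
  have i1 : Integrable (fun z : Rd d × Rd d => h z.1) π := by
    have := (int_bound p R hp hR μ hμ h hc K hK h0 hl).1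
    rw [← h1] at this
    exact this.comp_measurable measurable_fst
  have i2 : Integrable (fun z : Rd d × Rd d => h z.2) π := by
    have := (int_bound p R hp hR ν hν h hc K hK h0 hl).1
    rw [← h2] at this
    exact this.comp_measurable measurable_snd
  have e : ∫ x, h x ∂μ - ∫ x, h x ∂ν = ∫ z, (h z.1 - h z.2) ∂π := by
    rw [integral_sub i1 i2]
    conv_lhs => rw [← h1, ← h2]
    rw [integral_map measurable_fst.aemeasurable hc.aestronglyMeasurable,
      integral_map measurable_snd.aemeasurable hc.aestronglyMeasurable]
  have main : ‖∫ z, (h z.1 - h z.2) ∂π‖ₑ ≤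
      ENNReal.ofReal (K * Q ^ ((p - 1) / p)) * c := by
    have hp0 : 0 < p := by linarith
    calc _ ≤ ∫⁻ z, ‖h z.1 - h z.2‖ₑ ∂π := enorm_integral_le_lintegral_enorm _
      _ ≤ ∫⁻ z, ENNReal.ofReal K * ((ENNReal.ofReal ((1 + ‖z.1‖ + ‖z.2‖) ^ p)) ^ ((p - 1) / p) *
            ((‖z.1 - z.2‖₊ : ℝ≥0∞) ^ p) ^ (1 / p)) ∂π := by
          apply lintegral_mono
          intro z
          dsimp only
          have q0 : 0 ≤ (p - 1) / p := div_nonneg (by linarith) hp0.le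
          rw [nnnorm_rpow _ p hp0.le, ENNReal.ofReal_rpow_of_nonneg (by positivity) q0,
            ENNReal.ofReal_rpow_of_nonneg (by positivity) (by positivity),
            ← Real.rpow_mul (by positivity), ← Real.rpow_mul (by positivity),
            mul_div_cancel₀ _ hp0.ne', mul_div_cancel₀ _ hp0.ne', Real.rpow_one,
            ← ENNReal.ofReal_mul (by positivity), ← ENNReal.ofReal_mul (by positivity),
            ← ofReal_norm]
          exact ENNReal.ofReal_le_ofReal (hl _ _)
      _ = ENNReal.ofReal K * ∫⁻ z, ((ENNReal.ofReal ((1 + ‖z.1‖ + ‖z.2‖) ^ p)) ^ ((p - 1) / p) *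
            ((‖z.1 - z.2‖₊ : ℝ≥0∞) ^ p) ^ (1 / p)) ∂π := by
          rw [lintegral_const_mul' _ _ ENNReal.ofReal_ne_top]
      _ ≤ ENNReal.ofReal K * ((∫⁻ z, ENNReal.ofReal ((1 + ‖z.1‖ + ‖z.2‖) ^ p) ∂π) ^ ((p - 1) / p) *
            c) := by
          gcongr
          apply ENNReal.lintegral_mul_norm_pow_le
          · fun_prop
          · fun_prop
          · exact div_nonneg (by linarith) hp0.le
          · positivity
          · field_simp; ring
      _ ≤ ENNReal.ofReal K * ((ENNReal.ofReal Q) ^ ((p - 1) / p) * c) := by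
          have q0 : 0 ≤ (p - 1) / p := div_nonneg (by linarith) hp0.le
          gcongr
      _ = _ := by
          have q0 : 0 ≤ (p - 1) / p := div_nonneg (by linarith) hp0.le
          rw [ENNReal.ofReal_rpow_of_nonneg hQ0.le q0, ENNReal.ofReal_mul hK.le, mul_assoc]
  rw [e]
  rw [← ENNReal.ofReal_toReal hfin, ← ENNReal.ofReal_mul (by positivity), ← ofReal_norm,
    ENNReal.ofReal_le_ofReal_iff (by positivity)] at main
  exact main

/-- Uniform lower bound on the normalization. -/
lemma denom_lower (β : ℝ) (hβ : 0 < β) {d : ℕ} {s ℓ u : ℝ} (hs : 0 ≤ s) (hu : 0 ≤ u)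
    (f : Rd d → ℝ) (hf : ClassA s ℓ u f) (p R : ℝ) (hp : 1 ≤ p) (hR : 0 < R) :
    ∃ c > 0, ∀ μ : Measure (Rd d), IsProbabilityMeasure μ → MomLE p R μ →
      Integrable (wFn β f) μ → c ≤ ∫ x, wFn β f x ∂μ := by
  obtain ⟨cu, hcu, Cu, hCu, hgu⟩ := hf.growth_upper
  set w0 := Real.exp (-β * (fStar f + cu * (2 * R) ^ u + Cu)) with hw0
  have hw0p : 0 < w0 := Real.exp_pos _
  refine ⟨w0 * (1 / 2), by positivity, fun μ _ hμ hi => ?_⟩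
  set S : Set (Rd d) := {x | 2 * R ≤ ‖x‖} with hS
  have hSm : MeasurableSet S := measurableSet_le measurable_const measurable_norm
  have hRp : 0 < R ^ p := by positivity
  have hmark : μ.real S ≤ 1 / 2 := by
    have h1 : ENNReal.ofReal ((2 * R) ^ p) * μ S ≤ ENNReal.ofReal (R ^ p) := by
      refine le_trans ?_ hμ
      refine le_trans ?_ (mul_meas_ge_le_lintegral₀ (by fun_prop) (ENNReal.ofReal ((2 * R) ^ p)))
      gcongr
      intro x hx
      change ENNReal.ofReal ((2 * R) ^ p) ≤ (‖x‖₊ : ℝ≥0∞) ^ p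
      rw [nnnorm_rpow _ p (by linarith)]
      exact ENNReal.ofReal_le_ofReal (Real.rpow_le_rpow (by positivity) hx (by linarith))
    have h2 : (2 * R) ^ p * μ.real S ≤ R ^ p := by
      have := ENNReal.toReal_mono ENNReal.ofReal_ne_top h1
      rwa [ENNReal.toReal_mul, ENNReal.toReal_ofReal (by positivity),
        ENNReal.toReal_ofReal (by positivity)] at this
    rw [Real.mul_rpow (by norm_num) hR.le] at h2
    have h3 : (2 : ℝ) ≤ 2 ^ p := by
      calc (2 : ℝ) = 2 ^ (1 : ℝ) := by simp
        _ ≤ _ := Real.rpow_le_rpow_of_exponent_le (by norm_num) hp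
    have h4 : 0 ≤ μ.real S := measureReal_nonneg
    have h5 : 2 ^ p * μ.real S ≤ 1 := by
      by_contra hcon
      push Not at hcon
      nlinarith
    nlinarith
  have hcompl : 1 / 2 ≤ μ.real Sᶜ := by
    rw [probReal_compl_eq_one_sub hSm]; linarith
  have hpt : ∀ x ∈ Sᶜ, w0 ≤ wFn β f x := by
    intro x hx
    have hx' : ‖x‖ ≤ 2 * R := by
      simp only [hS, Set.mem_compl_iff, Set.mem_ofPred_eq, not_le] at hx
      exact hx.le
    apply Real.exp_le_exp.2
    have h1 := hgu x
    have h2 : ‖x‖ ^ u ≤ (2 * R) ^ u := Real.rpow_le_rpow (norm_nonneg _) hx' hu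
    have h3 : cu * ‖x‖ ^ u ≤ cu * (2 * R) ^ u := by gcongr
    nlinarith
  calc w0 * (1 / 2) ≤ w0 * μ.real Sᶜ := by gcongr
    _ = ∫ x in Sᶜ, w0 ∂μ := by rw [setIntegral_const, smul_eq_mul, mul_comm]
    _ ≤ ∫ x in Sᶜ, wFn β f x ∂μ :=
        setIntegral_mono_on (integrable_const _).integrableOn hi.integrableOn hSm.compl hpt
    _ ≤ ∫ x, wFn β f x ∂μ :=
        setIntegral_le_integral hi (Filter.Eventually.of_forall fun x => (Real.exp_pos _).le)

lemma wCov_eq (β : ℝ) {d : ℕ} (f : Rd d → ℝ) (μ : Measure (Rd d)) (i j : Fin d)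
    (hD : ∫ x, wFn β f x ∂μ ≠ 0)
    (i0 : Integrable (fun x => wFn β f x) μ)
    (i1 : ∀ i : Fin d, Integrable (fun x : Rd d => wFn β f x * x i) μ)
    (i2 : Integrable (fun x : Rd d => wFn β f x * (x i * x j)) μ) :
    wCov β f μ i j = (∫ x, wFn β f x * (x i * x j) ∂μ) / (∫ x, wFn β f x ∂μ) -
      ((∫ x, wFn β f x * x i ∂μ) / (∫ x, wFn β f x ∂μ)) *
      ((∫ x, wFn β f x * x j ∂μ) / (∫ x, wFn β f x ∂μ)) := by
  have hm : ∀ k : Fin d, wMean β f μ k =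
      (∫ x, wFn β f x * x k ∂μ) / (∫ x, wFn β f x ∂μ) := by
    intro k
    have hintg : Integrable (fun x : Rd d => wFn β f x • x) μ := by
      refine Integrable.of_eval_piLp fun k => ?_
      simpa using i1 k
    have := (EuclideanSpace.proj (𝕜 := ℝ) k).integral_comp_comm hintg
    change ∫ x, wFn β f x * x k ∂μ = (∫ x, wFn β f x • x ∂μ) k at this
    simp only [wMean, PiLp.smul_apply, smul_eq_mul]
    rw [← this, div_eq_inv_mul]
  unfold wCov
  rw [← hm i, ← hm j]
  have hmi := hm i
  have hmj := hm j
  generalize wMean β f μ i = a at *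
  generalize wMean β f μ j = b at *
  have e : ∀ x : Rd d, wFn β f x * ((x i - a) * (x j - b)) =
      wFn β f x * (x i * x j) - b * (wFn β f x * x i) - a * (wFn β f x * x j)
        + a * b * wFn β f x := fun x => by ring
  simp_rw [e]
  have s1 : Integrable (fun x : Rd d => wFn β f x * (x i * x j) - b * (wFn β f x * x i)) μ :=
    i2.sub ((i1 i).const_mul b)
  have s2 : Integrable (fun x : Rd d => wFn β f x * (x i * x j) - b * (wFn β f x * x i)
      - a * (wFn β f x * x j)) μ := s1.sub ((i1 j).const_mul a)
  rw [integral_add s2 (i0.const_mul (a * b)), integral_sub s1 ((i1 j).const_mul a),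
    integral_sub i2 ((i1 i).const_mul b), integral_const_mul, integral_const_mul,
    integral_const_mul]
  rw [eq_div_iff hD] at hmi hmj
  rw [← hmi, ← hmj]
  field_simp
  ring

lemma quot_diff (A A' D D' c B E : ℝ) (hc : 0 < c) (hD : c ≤ D) (hD' : c ≤ D')
    (hA' : |A'| ≤ B) (h1 : |A - A'| ≤ E) (h2 : |D - D'| ≤ E) :
    |A / D - A' / D'| ≤ (1 / c + B / c ^ 2) * E := by
  have hDp : 0 < D := by linarith
  have hDp' : 0 < D' := by linarith
  have hB : 0 ≤ B := (abs_nonneg _).trans hA'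
  have hE : 0 ≤ E := (abs_nonneg _).trans h1
  have e : A / D - A' / D' = (A - A') / D - A' * (D - D') / (D * D') := by
    field_simp; ring
  rw [e]
  calc _ ≤ |(A - A') / D| + |A' * (D - D') / (D * D')| := abs_sub _ _
    _ = |A - A'| / D + |A'| * |D - D'| / (D * D') := by
        rw [abs_div, abs_div, abs_mul, abs_of_pos hDp, abs_of_pos (mul_pos hDp hDp')]
    _ ≤ E / c + B * E / (c * c) := by gcongr
    _ = _ := by field_simp

lemma quot_bd (A D c B : ℝ) (hc : 0 < c) (hD : c ≤ D) (hA : |A| ≤ B) : |A / D| ≤ B / c := by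
  have hB : 0 ≤ B := (abs_nonneg _).trans hA
  rw [abs_div, abs_of_pos (hc.trans_le hD)]
  gcongr

lemma frob_le {d : ℕ} (A : Matrix (Fin d) (Fin d) ℝ) (E : ℝ) (hE : 0 ≤ E)
    (h : ∀ i j, |A i j| ≤ E) : frobNorm A ≤ d * E := by
  unfold frobNorm
  apply Real.sqrt_le_iff.2
  refine ⟨by positivity, ?_⟩
  calc ∑ i, ∑ j, (A i j) ^ 2 ≤ ∑ _i : Fin d, ∑ _j : Fin d, E ^ 2 := by
        refine Finset.sum_le_sum fun i _ => Finset.sum_le_sum fun j _ => ?_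
        exact sq_le_sq' (neg_le_of_abs_le (h i j)) (le_of_abs_le (h i j))
    _ = _ := by simp; ring

/-- **Basic Wasserstein stability estimate for the weighted covariance.**
If `f ∈ A(s, ℓ, u)`, then for every `R > 0` and `p ≥ p_C(s, ℓ)` there is `L_C > 0`
such that `‖C_β(μ) - C_β(ν)‖_F ≤ L_C ⬝ W_p(μ, ν)` for all `μ, ν ∈ P_{p,R}(ℝ^d)`. -/
theorem weighted_cov_stability
    (β : ℝ) (hβ : 0 < β) (d : ℕ) (hd : 1 ≤ d)
    (s ℓ u : ℝ) (hs : 0 ≤ s) (hℓ : 0 ≤ ℓ) (hℓu : ℓ ≤ u)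
    (f : Rd d → ℝ) (hf : ClassA s ℓ u f)
    (R : ℝ) (hR : 0 < R) (p : ℝ) (hp : pC s ℓ ≤ p) :
    ∃ L > 0, ∀ μ ν : Measure (Rd d),
      IsProbabilityMeasure μ → IsProbabilityMeasure ν →
      MomLE p R μ → MomLE p R ν →
      frobNorm (wCov β f μ - wCov β f ν) ≤ L * Wp p μ ν := by
  have hp1 : 1 ≤ p := by
    unfold pC at hp
    split_ifs at hp <;> linarith
  obtain ⟨K, hK, hkey⟩ := key_lip β hβ d s ℓ u hs hℓ f hf p hp
  obtain ⟨c, hc, hden⟩ := denom_lower β hβ hs (hℓ.trans hℓu) f hf p R hp1 hR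
  have hfc := classA_continuous hs hf
  have hwc : Continuous (wFn β f) := by unfold wFn; fun_prop
  have hRp : 0 < R ^ p := by positivity
  set Q := 3 ^ p * (1 + R ^ p + R ^ p) with hQ
  have hQ0 : 0 < Q := by positivity
  set B := 2 * K * Q with hB
  have hB0 : 0 < B := by positivity
  set K' := K * Q ^ ((p - 1) / p) with hK'
  have hK'0 : 0 < K' := by positivity
  set q := 1 / c + B / c ^ 2 with hq
  have hq0 : 0 < q := by positivity
  have hd0 : (0 : ℝ) < d := by exact_mod_cast hd
  set L := d * ((q + 2 * (B / c) * q) * K') with hL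
  have hL0 : 0 < L := by positivity
  refine ⟨L, hL0, fun μ ν _ _ hμ hν => ?_⟩
  have bd : ∀ (μ : Measure (Rd d)) [IsProbabilityMeasure μ], MomLE p R μ → ∀ g, Adm g →
      Integrable (fun x => wFn β f x * g x) μ ∧ |∫ x, wFn β f x * g x ∂μ| ≤ B := by
    intro μ _ hμ g hg
    exact int_bound p R hp1 hR μ hμ _ (hwc.mul hg.cont) K hK (hkey g hg).1 (hkey g hg).2
  have dlow : ∀ (μ : Measure (Rd d)) [IsProbabilityMeasure μ], MomLE p R μ →
      Integrable (wFn β f) μ ∧ c ≤ ∫ x, wFn β f x ∂μ := by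
    intro μ hm hμ
    have hi : Integrable (wFn β f) μ := by simpa using (bd μ hμ _ adm_one).1
    exact ⟨hi, hden μ hm hμ hi⟩
  have cov : ∀ (μ : Measure (Rd d)) [IsProbabilityMeasure μ], MomLE p R μ → ∀ i j,
      wCov β f μ i j = (∫ x, wFn β f x * (x i * x j) ∂μ) / (∫ x, wFn β f x ∂μ) -
      ((∫ x, wFn β f x * x i ∂μ) / (∫ x, wFn β f x ∂μ)) *
      ((∫ x, wFn β f x * x j ∂μ) / (∫ x, wFn β f x ∂μ)) := by
    intro μ _ hμ i j
    exact wCov_eq β f μ i j (hc.trans_le (dlow μ hμ).2).ne' (dlow μ hμ).1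
      (fun i => (bd μ hμ _ (adm_coord i)).1) (bd μ hμ _ (adm_coord2 i j)).1
  have main : ∀ π : Measure (Rd d × Rd d), π.map Prod.fst = μ → π.map Prod.snd = ν →
      frobNorm (wCov β f μ - wCov β f ν) ≤
        L * ((∫⁻ z, (‖z.1 - z.2‖₊ : ℝ≥0∞) ^ p ∂π) ^ (1 / p)).toReal := by
    intro π h1 h2
    have df : ∀ g, Adm g → |∫ x, wFn β f x * g x ∂μ - ∫ x, wFn β f x * g x ∂ν| ≤
        K' * ((∫⁻ z, (‖z.1 - z.2‖₊ : ℝ≥0∞) ^ p ∂π) ^ (1 / p)).toReal := by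
      intro g hg
      exact int_diff p R hp1 hR μ ν hμ hν π h1 h2 _ (hwc.mul hg.cont) K hK
        (hkey g hg).1 (hkey g hg).2
    have hC0 : 0 ≤ ((∫⁻ z, (‖z.1 - z.2‖₊ : ℝ≥0∞) ^ p ∂π) ^ (1 / p)).toReal :=
      ENNReal.toReal_nonneg
    generalize ((∫⁻ z, (‖z.1 - z.2‖₊ : ℝ≥0∞) ^ p ∂π) ^ (1 / p)).toReal = C at *
    have dD : |∫ x, wFn β f x ∂μ - ∫ x, wFn β f x ∂ν| ≤ K' * C := by
      simpa using df _ adm_one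
    have qd : ∀ g, Adm g → |(∫ x, wFn β f x * g x ∂μ) / (∫ x, wFn β f x ∂μ) -
        (∫ x, wFn β f x * g x ∂ν) / (∫ x, wFn β f x ∂ν)| ≤ q * (K' * C) := fun g hg =>
      quot_diff _ _ _ _ c B _ hc (dlow μ hμ).2 (dlow ν hν).2 (bd ν hν g hg).2 (df g hg) dD
    have := frob_le (wCov β f μ - wCov β f ν) ((q + 2 * (B / c) * q) * K' * C) (by positivity) ?_
    · rw [hL]; linarith
    intro i j
    rw [Matrix.sub_apply, cov μ hμ, cov ν hν]
    have a2 := qd _ (adm_coord2 i j)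
    have ai := qd _ (adm_coord i)
    have aj := qd _ (adm_coord j)
    have bi := quot_bd _ _ c B hc (dlow μ hμ).2 (bd μ hμ _ (adm_coord i)).2
    have bj := quot_bd _ _ c B hc (dlow ν hν).2 (bd ν hν _ (adm_coord j)).2
    generalize (∫ x, wFn β f x * (x i * x j) ∂μ) / (∫ x, wFn β f x ∂μ) = P at *
    generalize (∫ x, wFn β f x * (x i * x j) ∂ν) / (∫ x, wFn β f x ∂ν) = P' at *
    generalize (∫ x, wFn β f x * x i ∂μ) / (∫ x, wFn β f x ∂μ) = m at *
    generalize (∫ x, wFn β f x * x i ∂ν) / (∫ x, wFn β f x ∂ν) = m' at *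
    generalize (∫ x, wFn β f x * x j ∂μ) / (∫ x, wFn β f x ∂μ) = n at *
    generalize (∫ x, wFn β f x * x j ∂ν) / (∫ x, wFn β f x ∂ν) = n' at *
    have e : P - m * n - (P' - m' * n') = (P - P') - (m * (n - n') + (m - m') * n') := by ring
    calc |P - m * n - (P' - m' * n')| ≤ |P - P'| + (|m| * |n - n'| + |m - m'| * |n'|) := by
          rw [e, ← abs_mul, ← abs_mul]
          refine (abs_sub _ _).trans ?_
          gcongr
          exact abs_add_le _ _
      _ ≤ q * (K' * C) + (B / c * (q * (K' * C)) + q * (K' * C) * (B / c)) := by gcongr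
      _ = _ := by ring
  unfold Wp
  set S := {c : ℝ≥0∞ | ∃ π : Measure (Rd d × Rd d),
      π.map Prod.fst = μ ∧ π.map Prod.snd = ν ∧
      c = (∫⁻ z, (‖z.1 - z.2‖₊ : ℝ≥0∞) ^ p ∂π) ^ (1 / p)} with hS
  have hne : sInf S ≠ ⊤ := by
    have hf1 : (μ.prod ν).map Prod.fst = μ := by simp
    have hf2 : (μ.prod ν).map Prod.snd = ν := by simp
    refine ne_top_of_le_ne_top (coupling_cost p R hp1 hR μ ν hμ hν (μ.prod ν) hf1 hf2) ?_
    exact sInf_le ⟨μ.prod ν, hf1, hf2, rfl⟩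
  have hle : ENNReal.ofReal (frobNorm (wCov β f μ - wCov β f ν) / L) ≤ sInf S := by
    apply le_sInf
    rintro b ⟨π, h1, h2, rfl⟩
    apply ENNReal.ofReal_le_of_le_toReal
    rw [div_le_iff₀ hL0, mul_comm]
    exact main π h1 h2
  have := (ENNReal.ofReal_le_iff_le_toReal hne).1 hle
  rw [div_le_iff₀ hL0] at this
  linarith

end
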